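/- For every ATRA₁ 𝒜 with alphabet Σ and every finite tree t with alphabet Σ: 𝒜 has an accepting abstract run on t if and only if 𝒜 has a final run on some finite data tree τ with tree(τ) = t. -/

import Mathlib

/-! ## Trees and data trees -/

abbrev Node : Type := List Bool

/-- A (possibly infinite) data tree over alphabet `A`, with data from `ℕ`.
It is represented by the partial labelling functions on nonleaf nodes:
`label n = some a` iff `n` is a nonleaf node labelled `a`, and similarly
`dlabel` gives the datum at each nonleaf node. -/
structure DataTree (A : Type) where
  label : Node → Option A
  dlabel : Node → Option ℕ
  root_nonleaf : (label []).isSome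
  domain_eq : ∀ n : Node, (dlabel n).isSome ↔ (label n).isSome
  tree_cond : ∀ (n : Node) (d : Bool), (label (n ++ [d])).isSome → (label n).isSome

namespace DataTree
variable {A : Type}

def Nonleaf (τ : DataTree A) (n : Node) : Prop := (τ.label n).isSome

/-- The set of nodes: the root together with both children of every nonleaf node. -/
def Nodes (τ : DataTree A) : Set Node :=
  {n | n = [] ∨ ∃ m d, n = m ++ [d] ∧ τ.Nonleaf m}

def Leaf (τ : DataTree A) (n : Node) : Prop := n ∈ τ.Nodes ∧ ¬ τ.Nonleaf n

def Finite (τ : DataTree A) : Prop := {n | τ.Nonleaf n}.Finite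

end DataTree

/-- A (possibly infinite) tree over alphabet `A` (a data tree without data). -/
structure BTree (A : Type) where
  label : Node → Option A
  root_nonleaf : (label []).isSome
  tree_cond : ∀ (n : Node) (d : Bool), (label (n ++ [d])).isSome → (label n).isSome

namespace BTree
variable {A : Type}
def Nonleaf (t : BTree A) (n : Node) : Prop := (t.label n).isSome
def Nodes (t : BTree A) : Set Node :=
  {n | n = [] ∨ ∃ m d, n = m ++ [d] ∧ t.Nonleaf m}
def Leaf (t : BTree A) (n : Node) : Prop := n ∈ t.Nodes ∧ ¬ t.Nonleaf n
def Finite (t : BTree A) : Prop := {n | t.Nonleaf n}.Finite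
end BTree

/-- The underlying tree of a data tree (erasing the data). -/
def DataTree.toTree {A : Type} (τ : DataTree A) : BTree A :=
  ⟨τ.label, τ.root_nonleaf, τ.tree_cond⟩

/-- `τ` and `τ'` have equal `l`-prefixes: they agree on all nodes of length `< l`
(hence their restrictions to nodes of length `≤ l` coincide). -/
def EqPrefix {A : Type} (τ τ' : DataTree A) (l : ℕ) : Prop :=
  ∀ n : Node, n.length < l → τ.label n = τ'.label n ∧ τ.dlabel n = τ'.dlabel n

open Classical in
/-- The distance between data trees: `0` if they are equal, and otherwise `1/l`
where `l` is least such that the `l`-prefixes are distinct. -/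
noncomputable def treeDist {A : Type} (τ τ' : DataTree A) : ℝ :=
  if τ = τ' then 0 else ((sInf {l : ℕ | ¬ EqPrefix τ τ' l} : ℕ) : ℝ)⁻¹

/-! ## Forward alternating tree 1-register automata (ATRA₁) -/

/-- Positive Boolean formulae over `Q`: atoms `q(d, ↓)` / `q(d, ¬↓)` are
`atom q d true` / `atom q d false`, where `d : Bool` is the direction. -/
inductive PosBool (Q : Type) : Type
  | atom : Q → Bool → Bool → PosBool Q
  | tt : PosBool Q
  | ff : PosBool Q
  | and : PosBool Q → PosBool Q → PosBool Q
  | or : PosBool Q → PosBool Q → PosBool Q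

/-- Satisfaction of a positive Boolean formula by a quadruple
`R d u` of subsets of `Q` (`d` = direction, `u = true` means register update `↓`). -/
def PosBool.Sat {Q : Type} (R : Bool → Bool → Set Q) : PosBool Q → Prop
  | .atom q d u => q ∈ R d u
  | .tt => True
  | .ff => False
  | .and φ ψ => φ.Sat R ∧ ψ.Sat R
  | .or φ ψ => φ.Sat R ∨ ψ.Sat R

/-- The dual of a positive Boolean formula: swaps `⊤`/`⊥` and `∧`/`∨`. -/
def PosBool.dual {Q : Type} : PosBool Q → PosBool Q
  | .atom q d u => .atom q d u
  | .tt => .ff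
  | .ff => .tt
  | .and φ ψ => .or φ.dual ψ.dual
  | .or φ ψ => .and φ.dual ψ.dual

def PosBool.map {Q Q' : Type} (f : Q → Q') : PosBool Q → PosBool Q'
  | .atom q d u => .atom (f q) d u
  | .tt => .tt
  | .ff => .ff
  | .and φ ψ => .and (φ.map f) (ψ.map f)
  | .or φ ψ => .or (φ.map f) (ψ.map f)

/-- A forward alternating tree 1-register automaton. -/
structure ATRA (A : Type) where
  Q : Type
  fin : Finite Q
  qI : Q
  F : Set Q
  δ : Q → A → Bool → PosBool Q

namespace ATRA
variable {A : Type}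

/-- The transition relation between configurations (finite sets of threads),
relative to a letter `a` and a datum `E`. -/
def Trans (M : ATRA A) (a : A) (E : ℕ) (G H0 H1 : Set (M.Q × ℕ)) : Prop :=
  ∀ q D, (q, D) ∈ G →
    ∃ R : Bool → Bool → Set M.Q,
      (M.δ q a (decide (D = E))).Sat R ∧
      ∀ d : Bool,
        (∀ r ∈ R d true, (r, E) ∈ (if d then H1 else H0)) ∧
        (∀ r ∈ R d false, (r, D) ∈ (if d then H1 else H0))

/-- A run of `M` on a data tree `τ`. -/
structure Run (M : ATRA A) (τ : DataTree A) where
  G : Node → Set (M.Q × ℕ)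
  finite : ∀ n : Node, (G n).Finite
  support : ∀ n : Node, n ∉ τ.Nodes → G n = ∅
  init : ∃ D : ℕ, τ.dlabel [] = some D ∧ (M.qI, D) ∈ G []
  step : ∀ (n : Node) (a : A) (D : ℕ), τ.label n = some a → τ.dlabel n = some D →
    M.Trans a D (G n) (G (n ++ [false])) (G (n ++ [true]))

def Run.Final {M : ATRA A} {τ : DataTree A} (ρ : M.Run τ) : Prop :=
  ∀ n, τ.Leaf n → ∀ q D, (q, D) ∈ ρ.G n → q ∈ M.F

def Run.FiniteRun {M : ATRA A} {τ : DataTree A} (ρ : M.Run τ) : Prop :=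
  ∃ l : ℕ, ∀ n : Node, l ≤ n.length → ρ.G n = ∅

/-- The language of `M` over finite data trees. -/
def Lfin (M : ATRA A) : Set (DataTree A) :=
  {τ | τ.Finite ∧ ∃ ρ : M.Run τ, ρ.Final}

/-- The safety language of `M`: data trees on which `M` has a final run. -/
def Lsaf (M : ATRA A) : Set (DataTree A) :=
  {τ | ∃ ρ : M.Run τ, ρ.Final}

/-- The co-safety language of `M`: data trees on which `M` has a final finite run. -/
def Lcos (M : ATRA A) : Set (DataTree A) :=
  {τ | ∃ ρ : M.Run τ, ρ.Final ∧ ρ.FiniteRun}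

/-- The dual automaton: final states complemented, transition formulae dualised. -/
def dual (M : ATRA A) : ATRA A :=
  ⟨M.Q, M.fin, M.qI, M.Fᶜ, fun q a b => (M.δ q a b).dual⟩

end ATRA

/-! ## The data abstraction for ATRA₁ configurations -/

/-- The bundle of a datum `D` in a configuration `G`. -/
def Bundle {Q : Type} (G : Set (Q × ℕ)) (D : ℕ) : Set Q := {q | (q, D) ∈ G}

/-- The abstraction of a configuration: for each (nonempty) `S ⊆ Q`, the number
of data whose bundle equals `S`. -/
noncomputable def AbstractOf {Q : Type} (G : Set (Q × ℕ)) : Set Q → ℕ :=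
  fun S => Set.ncard {D : ℕ | Bundle G D = S}

/-- `⟨S, i⟩` is an abstract datum of the abstract configuration `v`. -/
def AbsDatum {Q : Type} (v : Set Q → ℕ) (S : Set Q) (i : ℕ) : Prop :=
  S.Nonempty ∧ 1 ≤ i ∧ i ≤ v S

open Classical in
/-- The abstract transition relation `v →_a^{Q_=} w₀, w₁`. -/
def ATRA.AbsTrans {A : Type} (M : ATRA A) (a : A) (Qeq : Set M.Q)
    (v w0 w1 : Set M.Q → ℕ) : Prop :=
  (0 < v Qeq ∨ Qeq = ∅) ∧
  ∃ R' : Set M.Q → ℕ → Bool → Bool → Set M.Q,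
    (∀ S i, AbsDatum v S i → ∀ q ∈ S,
      ∃ R : Bool → Bool → Set M.Q,
        (M.δ q a (decide (S = Qeq ∧ i = 1))).Sat R ∧
        ∀ d u, R d u ⊆ R' S i d u) ∧
    (∀ d : Bool,
      ∃ Req : Set M.Q,
        R' Qeq 1 d false ⊆ Req ∧
        (∀ S i, AbsDatum v S i → R' S i d true ⊆ Req) ∧
        (∀ S' : Set M.Q, S'.Nonempty →
          Set.ncard {p : Set M.Q × ℕ |
              AbsDatum v p.1 p.2 ∧ p ≠ (Qeq, 1) ∧ R' p.1 p.2 d false = S'} +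
            (if Req = S' then 1 else 0) ≤ (if d then w1 else w0) S'))

/-- An abstract run of `M` on a finite tree `t`. -/
structure ATRA.AbsRun {A : Type} (M : ATRA A) (t : BTree A) where
  v : Node → Set M.Q → ℕ
  step : ∀ (n : Node) (a : A), t.label n = some a →
    ∃ Qeq : Set M.Q,
      M.AbsTrans a Qeq (v n) (v (n ++ [false])) (v (n ++ [true])) ∧
      (n = [] → M.qI ∈ Qeq)

/-- An abstract run is accepting iff at every leaf, `v_n(S) = 0` for all `S ⊄ F`. -/
def ATRA.AbsRun.Accepting {A : Type} {M : ATRA A} {t : BTree A}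
    (ρ : M.AbsRun t) : Prop :=
  ∀ n, t.Leaf n → ∀ S : Set M.Q, ¬ S ⊆ M.F → ρ.v n S = 0

/-!
Number the data of each bundle of a concrete configuration `G`, giving the datum `E` of the
current node the number `1`. This identifies the data of `G` with the abstract data of its
abstraction, and `E` with `⟨Q_=, 1⟩`; read through this identification, a concrete transition from
`G` is an abstract one. Conversely, a configuration with at most `v S` data of each bundle `S`
embeds into the abstract data of `v`, and the sets provided by an abstract transition from `v`,
read through the embedding, prescribe the bundles of concrete successors that stay below the
abstract successors. Such concrete steps are chained from the root of the tree downwards.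
-/

/-! ### Counting and dependent choice along a tree -/

theorem ncard_sdiff_singleton_add_ite {α : Type*} {X : Set α} (hX : X.Finite) (a : α)
    [Decidable (a ∈ X)] : (X \ {a}).ncard + (if a ∈ X then 1 else 0) = X.ncard := by
  split_ifs with ha
  · exact Set.ncard_sdiff_singleton_add_one ha hX
  · rw [Set.sdiff_singleton_eq_self ha, add_zero]

theorem exists_bijOn_Icc_one_ncard {α : Type*} {X : Set α} (hX : X.Finite) (a : α) :
    ∃ f : α → ℕ, Set.BijOn f X (Set.Icc 1 X.ncard) ∧ (a ∈ X → f a = 1) := by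
  classical
  have hcard : X.encard = (Set.Icc 1 X.ncard).encard := by
    rw [← hX.cast_ncard_eq, ← (Set.finite_Icc 1 X.ncard).cast_ncard_eq,
      Set.ncard_eq_toFinset_card' (Set.Icc 1 X.ncard)]
    simp
  obtain ⟨f, hf⟩ := hX.exists_bijOn_of_encard_eq hcard
  by_cases ha : a ∈ X
  · have hfa : f a ∈ Set.Icc 1 X.ncard := hf.mapsTo ha
    have hone : 1 ∈ Set.Icc 1 X.ncard := ⟨le_rfl, hfa.1.trans hfa.2⟩
    exact ⟨Equiv.swap (f a) 1 ∘ f, (Equiv.bijOn_swap hfa hone).comp hf,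
      fun _ => Equiv.swap_apply_left _ _⟩
  · exact ⟨f, hf, fun h => absurd h ha⟩

theorem exists_forall_step_append_singleton {α : Type*} {S : List α → Type*} (init : S [])
    (step : ∀ n, S n → (∀ d, S (n ++ [d])) → Prop) (h : ∀ n s, ∃ s', step n s s') :
    ∃ f : ∀ n, S n, f [] = init ∧ ∀ n, step n (f n) fun d => f (n ++ [d]) := by
  choose succ hsucc using h
  refine ⟨fun n => n.reverseRecOn init fun m d s => succ m s d, List.reverseRecOn_nil _ _,
    fun n => ?_⟩
  simp only [List.reverseRecOn_concat]
  exact hsucc n _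

/-! ### Configurations and their abstractions -/

section Configurations

variable {Q : Type} {G H : Set (Q × ℕ)} {v : Set Q → ℕ} {S T : Set Q} {D E : ℕ}

/-- The data that occur in the configuration `G`. -/
def activeData (G : Set (Q × ℕ)) : Set ℕ := {D | (Bundle G D).Nonempty}

/-- The set of abstract data of the abstract configuration `v`. -/
def absData (v : Set Q → ℕ) : Set (Set Q × ℕ) := {p | AbsDatum v p.1 p.2}

/-- `G` is a configuration in which every nonempty bundle occurs at most as often as the abstract
configuration `v` allows. Allowing fewer occurrences makes the notion stable under abstract
transitions, which may add abstract data. -/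
structure IsConcretization (G : Set (Q × ℕ)) (v : Set Q → ℕ) : Prop where
  finite : G.Finite
  abstractOf_le : ∀ S : Set Q, S.Nonempty → AbstractOf G S ≤ v S

/-- `E` can play the role of the datum of the current node in a concrete counterpart of an
abstract transition with `Q_= = S`: its bundle is `S` if some datum has that bundle, and otherwise
`E` does not occur in `G`. -/
def IsPivot (G : Set (Q × ℕ)) (S : Set Q) (E : ℕ) : Prop :=
  Bundle G E = S ∨ Bundle G E = ∅ ∧ ∀ D, Bundle G D ≠ S

/-- `idx` numbers the data of each bundle of `G` consecutively from `1`, so that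
`D ↦ ⟨Bundle G D, idx D⟩` identifies the data of `G` with the abstract data of its abstraction;
`E` comes first in its bundle. -/
structure IsNumbering (G : Set (Q × ℕ)) (E : ℕ) (idx : ℕ → ℕ) : Prop where
  idx_eq_one : idx E = 1
  bijOn : Set.BijOn (fun D => (Bundle G D, idx D)) (activeData G) (absData (AbstractOf G))

/-- The configuration in which the bundle of `E` is `T`, the bundle of any other datum `D` of `G`
is `β D`, and no further data occur. -/
def rebundle (G : Set (Q × ℕ)) (E : ℕ) (T : Set Q) (β : ℕ → Set Q) : Set (Q × ℕ) :=
  {x | if x.2 = E then x.1 ∈ T else x.2 ∈ activeData G ∧ x.1 ∈ β x.2}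

theorem finite_activeData (hG : G.Finite) : (activeData G).Finite :=
  (hG.image Prod.snd).subset fun D ⟨q, hq⟩ => ⟨(q, D), hq, rfl⟩

theorem finite_setOf_bundle_eq (hG : G.Finite) (hS : S.Nonempty) :
    {D | Bundle G D = S}.Finite := by
  refine (finite_activeData hG).subset ?_
  rintro D rfl
  exact hS

theorem finite_absData [Finite Q] (v : Set Q → ℕ) : (absData v).Finite := by
  refine (Set.finite_iUnion fun S => (Set.finite_Icc 1 (v S)).image (Prod.mk S)).subset ?_
  rintro ⟨S, i⟩ ⟨_, hi⟩
  exact Set.mem_iUnion.2 ⟨S, i, hi, rfl⟩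

theorem abstractOf_eq_zero (h : ∀ D, Bundle G D ≠ S) : AbstractOf G S = 0 := by
  simp only [AbstractOf, h, Set.ofPred_false, Set.ncard_empty]

theorem abstractOf_bundle_pos (hG : G.Finite) (hD : D ∈ activeData G) :
    0 < AbstractOf G (Bundle G D) :=
  (Set.ncard_pos (finite_setOf_bundle_eq hG hD)).2 ⟨D, rfl⟩

theorem isConcretization_empty (v : Set Q → ℕ) : IsConcretization ∅ v where
  finite := Set.finite_empty
  abstractOf_le S hS := by
    have hne : ∀ D, Bundle (∅ : Set (Q × ℕ)) D ≠ S := fun _ h => hS.ne_empty h.symm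
    exact (abstractOf_eq_zero hne).trans_le (Nat.zero_le _)

theorem bundle_prod_singleton_self (S : Set Q) (E : ℕ) : Bundle (S ×ˢ {E}) E = S := by
  simp [Bundle]

theorem isConcretization_prod_singleton [Finite Q] (hS : 0 < v S) (E : ℕ) :
    IsConcretization (S ×ˢ {E}) v where
  finite := S.toFinite.prod (Set.finite_singleton E)
  abstractOf_le T hT := by
    have hE : ∀ D, Bundle (S ×ˢ {E}) D = T → D = E := by
      rintro D rfl
      exact hT.some_mem.2
    rcases Set.eq_empty_or_nonempty {D | Bundle (S ×ˢ {E}) D = T} with h | ⟨D, hD⟩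
    · simp only [AbstractOf, h, Set.ncard_empty, Nat.zero_le]
    · obtain rfl : S = T := by
        obtain rfl := hE D hD
        exact (bundle_prod_singleton_self S D).symm.trans hD
      calc AbstractOf (S ×ˢ {E}) S ≤ ({E} : Set ℕ).ncard := Set.ncard_le_ncard hE
        _ = 1 := Set.ncard_singleton E
        _ ≤ v S := hS

theorem exists_isPivot (hG : G.Finite) (S : Set Q) : ∃ E, IsPivot G S E := by
  by_cases hS : ∃ D, Bundle G D = S
  · exact hS.imp fun _ => Or.inl
  · obtain ⟨E, hE⟩ := (finite_activeData hG).exists_notMem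
    exact ⟨E, Or.inr ⟨Set.not_nonempty_iff_eq_empty.1 hE, not_exists.1 hS⟩⟩

theorem IsPivot.bundle_eq (hE : IsPivot G S E) (hD : Bundle G D = S) : Bundle G E = S :=
  hE.resolve_right fun h => h.2 D hD

/-! ### Numberings -/

theorem exists_isNumbering (hG : G.Finite) (E : ℕ) : ∃ idx, IsNumbering G E idx := by
  have hnum : ∀ S : Set Q, ∃ f : ℕ → ℕ, (Bundle G E = S → f E = 1) ∧
      (S.Nonempty → Set.BijOn f {D | Bundle G D = S} (Set.Icc 1 (AbstractOf G S))) := by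
    intro S
    by_cases hS : S.Nonempty
    · obtain ⟨f, hf, hfE⟩ := exists_bijOn_Icc_one_ncard (finite_setOf_bundle_eq hG hS) E
      exact ⟨f, hfE, fun _ => hf⟩
    · exact ⟨fun _ => 1, fun _ => rfl, fun h => absurd h hS⟩
  choose f hfE hf using hnum
  refine ⟨fun D => f (Bundle G D) D, hfE _ rfl, fun D hD => ⟨hD, (hf _ hD).mapsTo rfl⟩, ?_, ?_⟩
  · intro D hD D' _ h
    obtain ⟨hbundle, hidx⟩ := Prod.mk.inj h
    exact (hf _ hD).injOn rfl hbundle.symm (hidx.trans (congrArg (f · D') hbundle.symm))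
  · rintro ⟨S, i⟩ ⟨hS, hi⟩
    obtain ⟨D, rfl, rfl⟩ := (hf S hS).surjOn hi
    exact ⟨D, hS, rfl⟩

/-- The first clause matters even when `E` does not occur in `G`: then `⟨Bundle G E, 1⟩ = ⟨∅, 1⟩`
is not an abstract datum, but the definition of abstract transitions still refers to it. -/
theorem IsNumbering.exists_decoding {idx : ℕ → ℕ} (h : IsNumbering G E idx) :
    ∃ dec : Set Q × ℕ → ℕ, dec (Bundle G E, 1) = E ∧
      ∀ p ∈ absData (AbstractOf G), (Bundle G (dec p), idx (dec p)) = p := by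
  have hdec : ∀ p, ∃ D, (p = (Bundle G E, 1) → D = E) ∧
      (p ∈ absData (AbstractOf G) → (Bundle G D, idx D) = p) := by
    intro p
    by_cases hpE : p = (Bundle G E, 1)
    · exact ⟨E, fun _ => rfl, fun _ => by rw [h.idx_eq_one, hpE]⟩
    · by_cases hp : p ∈ absData (AbstractOf G)
      · obtain ⟨D, _, hD⟩ := h.bijOn.surjOn hp
        exact ⟨D, fun h => absurd h hpE, fun _ => hD⟩
      · exact ⟨E, fun _ => rfl, fun h => absurd h hp⟩
  choose dec hdecE hdec using hdec
  exact ⟨dec, hdecE _ rfl, hdec⟩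

theorem IsNumbering.eq_pivot_iff {idx : ℕ → ℕ} (h : IsNumbering G E idx) (hE : IsPivot G S E)
    (hD : D ∈ activeData G) : (Bundle G D, idx D) = (S, 1) ↔ D = E := by
  constructor
  · intro hDS
    have hbundle : Bundle G E = Bundle G D :=
      (hE.bundle_eq (congrArg Prod.fst hDS)).trans (congrArg Prod.fst hDS).symm
    have hEactive : (Bundle G E).Nonempty := hbundle ▸ hD
    refine h.bijOn.injOn hD hEactive (Prod.ext hbundle.symm ?_)
    exact (congrArg Prod.snd hDS).trans h.idx_eq_one.symm
  · rintro rfl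
    rw [h.idx_eq_one, hE.resolve_right fun h => hD.ne_empty h.1]

theorem IsConcretization.mapsTo_absData {idx : ℕ → ℕ} (hG : IsConcretization G v)
    (h : IsNumbering G E idx) :
    Set.MapsTo (fun D => (Bundle G D, idx D)) (activeData G) (absData v) := fun _ hD =>
  have hp := h.bijOn.mapsTo hD
  ⟨hp.1, hp.2.1, hp.2.2.trans (hG.abstractOf_le _ hp.1)⟩

/-! ### Counting bundles -/

open Classical in
theorem ncard_add_ite_le_abstractOf {α : Type*} {P : Set α} {c : α → ℕ} (hH : H.Finite)
    (hinj : P.InjOn c) (hc : ∀ p ∈ P, c p ≠ E) (hS : S.Nonempty) :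
    {p ∈ P | Bundle H (c p) = S}.ncard + (if Bundle H E = S then 1 else 0) ≤ AbstractOf H S := by
  have hfin := finite_setOf_bundle_eq hH hS
  have hle : {p ∈ P | Bundle H (c p) = S}.ncard ≤ ({D | Bundle H D = S} \ {E}).ncard :=
    Set.ncard_le_ncard_of_injOn c (fun p hp => ⟨hp.2, hc p hp.1⟩)
      (hinj.mono fun _ hp => hp.1) hfin.sdiff
  exact (Nat.add_le_add_right hle _).trans_eq (ncard_sdiff_singleton_add_ite hfin E)

theorem bundle_rebundle_self (G : Set (Q × ℕ)) (E : ℕ) (T : Set Q) (β : ℕ → Set Q) :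
    Bundle (rebundle G E T β) E = T := by
  simp [Bundle, rebundle]

theorem bundle_rebundle_of_ne {β : ℕ → Set Q} (hDE : D ≠ E) (hD : D ∈ activeData G) :
    Bundle (rebundle G E T β) D = β D := by
  simp [Bundle, rebundle, hDE, hD]

theorem activeData_rebundle_subset (G : Set (Q × ℕ)) (E : ℕ) (T : Set Q) (β : ℕ → Set Q) :
    activeData (rebundle G E T β) ⊆ insert E (activeData G) := by
  rintro D ⟨q, hq⟩
  by_cases hDE : D = E
  · exact Or.inl hDE
  · have hDq : D ∈ activeData G ∧ q ∈ β D := by simpa [Bundle, rebundle, hDE] using hq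
    exact Or.inr hDq.1

theorem finite_rebundle [Finite Q] (hG : G.Finite) (E : ℕ) (T : Set Q) (β : ℕ → Set Q) :
    (rebundle G E T β).Finite :=
  (Set.finite_univ.prod ((finite_activeData hG).insert E)).subset fun ⟨q, _⟩ hx =>
    ⟨trivial, activeData_rebundle_subset G E T β ⟨q, hx⟩⟩

open Classical in
theorem abstractOf_rebundle_le [Finite Q] {α : Type*} {P : Set α} {c : ℕ → α} {f : α → Set Q}
    (hG : G.Finite) (hP : P.Finite) (hinj : (activeData G).InjOn c)
    (hc : ∀ D ∈ activeData G, D ≠ E → c D ∈ P) (hS : S.Nonempty) :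
    AbstractOf (rebundle G E T (f ∘ c)) S ≤
      {p ∈ P | f p = S}.ncard + (if T = S then 1 else 0) := by
  set K := rebundle G E T (f ∘ c)
  have hactive : ∀ D ∈ {D | Bundle K D = S} \ {E}, D ∈ activeData G := by
    rintro D ⟨rfl, hDE⟩
    exact (activeData_rebundle_subset G E T _ hS).resolve_left hDE
  have hle : ({D | Bundle K D = S} \ {E}).ncard ≤ {p ∈ P | f p = S}.ncard := by
    refine Set.ncard_le_ncard_of_injOn c (fun D hD => ⟨hc D (hactive D hD) hD.2, ?_⟩)
      (hinj.mono hactive) (hP.subset fun _ hp => hp.1)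
    exact (bundle_rebundle_of_ne hD.2 (hactive D hD)).symm.trans hD.1
  have hfin : {D | Bundle K D = S}.Finite :=
    finite_setOf_bundle_eq (finite_rebundle hG E T _) hS
  calc AbstractOf K S
      = ({D | Bundle K D = S} \ {E}).ncard + (if Bundle K E = S then 1 else 0) :=
        (ncard_sdiff_singleton_add_ite hfin E).symm
    _ ≤ {p ∈ P | f p = S}.ncard + (if T = S then 1 else 0) := by
        rw [bundle_rebundle_self]
        exact Nat.add_le_add_right hle _

end Configurations

/-! ### Transitions -/

theorem PosBool.Sat.mono {Q : Type} {R R' : Bool → Bool → Set Q} {φ : PosBool Q} (h : φ.Sat R)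
    (hRR' : R ≤ R') : φ.Sat R' := by
  induction φ with
  | atom q d u => exact hRR' d u h
  | tt => trivial
  | ff => exact h
  | and φ ψ ihφ ihψ => exact h.imp ihφ ihψ
  | or φ ψ ihφ ihψ => exact h.imp ihφ ihψ

namespace ATRA

variable {A : Type} {M : ATRA A} {a : A}

/-- Formulae being positive, it suffices to test the largest admissible quadruple. -/
theorem trans_iff_sat {E : ℕ} {G : Set (M.Q × ℕ)} {H : Bool → Set (M.Q × ℕ)} :
    M.Trans a E G (H false) (H true) ↔ ∀ D, ∀ q ∈ Bundle G D,
      (M.δ q a (decide (D = E))).Sat fun d u => Bundle (H d) (if u then E else D) := by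
  have hdir : ∀ d, (if d then H true else H false) = H d := by rintro (_ | _) <;> rfl
  simp only [Trans, hdir]
  constructor
  · intro h D q hq
    obtain ⟨R, hR, hRH⟩ := h q D hq
    refine hR.mono fun d u => ?_
    cases u
    · exact (hRH d).2
    · exact (hRH d).1
  · intro h q D hq
    exact ⟨_, h D q hq, fun d => ⟨fun _ hr => hr, fun _ hr => hr⟩⟩

open Classical in
theorem absTrans_iff_sat {Qeq : Set M.Q} {v : Set M.Q → ℕ} {w : Bool → Set M.Q → ℕ} :
    M.AbsTrans a Qeq v (w false) (w true) ↔ (0 < v Qeq ∨ Qeq = ∅) ∧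
      ∃ R : Set M.Q × ℕ → Bool → Bool → Set M.Q,
        (∀ p ∈ absData v, ∀ q ∈ p.1, (M.δ q a (decide (p = (Qeq, 1)))).Sat (R p)) ∧
        ∀ d, ∃ Req : Set M.Q, R (Qeq, 1) d false ⊆ Req ∧
          (∀ p ∈ absData v, R p d true ⊆ Req) ∧
          ∀ S : Set M.Q, S.Nonempty →
            {p ∈ absData v \ {(Qeq, 1)} | R p d false = S}.ncard +
              (if Req = S then 1 else 0) ≤ w d S := by
  have hdir : ∀ d, (if d then w true else w false) = w d := by rintro (_ | _) <;> rfl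
  simp only [AbsTrans, hdir, absData, Prod.forall, Set.mem_ofPred_eq, Set.mem_sdiff,
    Set.mem_singleton_iff, and_assoc, Prod.mk.injEq]
  refine and_congr_right fun _ => ⟨?_, ?_⟩
  · rintro ⟨R', hsat, hcount⟩
    refine ⟨fun p => R' p.1 p.2, fun S i hp q hq => ?_, hcount⟩
    obtain ⟨R, hR, hRR'⟩ := hsat S i hp q hq
    exact hR.mono hRR'
  · rintro ⟨R, hsat, hcount⟩
    exact ⟨fun S i => R (S, i), fun S i hp q hq => ⟨_, hsat S i hp q hq, fun _ _ => subset_rfl⟩,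
      hcount⟩

theorem Trans.absTrans {E : ℕ} {G : Set (M.Q × ℕ)} {H : Bool → Set (M.Q × ℕ)}
    (h : M.Trans a E G (H false) (H true)) (hG : G.Finite) (hH : ∀ d, (H d).Finite) :
    M.AbsTrans a (Bundle G E) (AbstractOf G) (AbstractOf (H false)) (AbstractOf (H true)) := by
  classical
  obtain ⟨idx, hidx⟩ := exists_isNumbering hG E
  obtain ⟨dec, hdecE, hdec⟩ := hidx.exists_decoding
  have hpivot : ∀ p ∈ absData (AbstractOf G), p = (Bundle G E, 1) ↔ dec p = E := by
    refine fun p hp => ⟨fun hpE => hpE ▸ hdecE, fun hpE => ?_⟩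
    rw [← hdec p hp, hpE, hidx.idx_eq_one]
  have hbundle : ∀ p ∈ absData (AbstractOf G), Bundle G (dec p) = p.1 :=
    fun p hp => congrArg Prod.fst (hdec p hp)
  have hinj : (absData (AbstractOf G)).InjOn dec :=
    Set.LeftInvOn.injOn (f₁' := fun D => (Bundle G D, idx D)) hdec
  refine (absTrans_iff_sat (w := fun d => AbstractOf (H d))).2 ⟨?_,
    fun p d u => Bundle (H d) (if u then E else dec p), fun p hp q hq => ?_,
    fun d => ⟨Bundle (H d) E, ?_, fun _ _ => subset_rfl, fun S hS => ?_⟩⟩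
  · exact (Bundle G E).eq_empty_or_nonempty.symm.imp_left (abstractOf_bundle_pos hG)
  · simp only [hpivot p hp]
    exact trans_iff_sat.1 h (dec p) q (by rwa [hbundle p hp])
  · exact (congrArg (Bundle (H d)) hdecE).subset
  · exact ncard_add_ite_le_abstractOf (hH d) (hinj.mono Set.sdiff_subset)
      (fun p hp => mt (hpivot p hp.1).2 hp.2) hS

theorem AbsTrans.exists_trans {E : ℕ} {G : Set (M.Q × ℕ)} {Qeq : Set M.Q} {v : Set M.Q → ℕ}
    {w : Bool → Set M.Q → ℕ} (h : M.AbsTrans a Qeq v (w false) (w true))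
    (hG : IsConcretization G v) (hE : IsPivot G Qeq E) :
    ∃ H : Bool → Set (M.Q × ℕ), (∀ d, IsConcretization (H d) (w d)) ∧
      M.Trans a E G (H false) (H true) := by
  classical
  have := M.fin
  obtain ⟨_, R, hsat, hcount⟩ := absTrans_iff_sat.1 h
  choose Req hkeep hupdate hcount using hcount
  obtain ⟨idx, hidx⟩ := exists_isNumbering hG.finite E
  let code : ℕ → Set M.Q × ℕ := fun D => (Bundle G D, idx D)
  have hcode : Set.MapsTo code (activeData G) (absData v) := hG.mapsTo_absData hidx
  have hpivot : ∀ D ∈ activeData G, code D = (Qeq, 1) ↔ D = E := fun D => hidx.eq_pivot_iff hE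
  let H : Bool → Set (M.Q × ℕ) := fun d => rebundle G E (Req d) ((R · d false) ∘ code)
  refine ⟨H, fun d => ⟨finite_rebundle hG.finite E _ _, fun S hS => ?_⟩,
    trans_iff_sat.2 fun D q hq => ?_⟩
  · exact (abstractOf_rebundle_le hG.finite (finite_absData v).sdiff hidx.bijOn.injOn
      (fun D hD hDE => ⟨hcode hD, mt (hpivot D hD).1 hDE⟩) hS).trans (hcount d S hS)
  · have hD : D ∈ activeData G := ⟨q, hq⟩
    have hsatD := hsat (code D) (hcode hD) q hq
    simp only [hpivot D hD] at hsatD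
    refine hsatD.mono fun d u => ?_
    cases u
    · change R (code D) d false ≤ Bundle (H d) D
      by_cases hDE : D = E
      · rw [(hpivot D hD).2 hDE, hDE, bundle_rebundle_self]
        exact hkeep d
      · exact (bundle_rebundle_of_ne (β := (R · d false) ∘ code) hDE hD).symm.subset
    · change R (code D) d true ≤ Bundle (H d) E
      rw [bundle_rebundle_self]
      exact hupdate d _ (hcode hD)

end ATRA

/-! ### Runs -/

/-- The data tree obtained by attaching the datum `E n` to each nonleaf node `n` of `t`. -/
def BTree.withData {A : Type} (t : BTree A) (E : Node → ℕ) : DataTree A where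
  label := t.label
  dlabel n := (t.label n).map fun _ => E n
  root_nonleaf := t.root_nonleaf
  domain_eq n := by rw [Option.isSome_map]
  tree_cond := t.tree_cond

namespace ATRA

variable {A : Type} {M : ATRA A}

/-- The abstraction of a run, taken node by node. -/
noncomputable def Run.toAbsRun {τ : DataTree A} (ρ : M.Run τ) : M.AbsRun τ.toTree where
  v n := AbstractOf (ρ.G n)
  step n a ha := by
    have ha' : τ.label n = some a := ha
    obtain ⟨E, hE⟩ := Option.isSome_iff_exists.1 ((τ.domain_eq n).2 (by simp [ha']))
    refine ⟨Bundle (ρ.G n) E, Trans.absTrans (H := fun d => ρ.G (n ++ [d]))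
      (ρ.step n a E ha' hE) (ρ.finite n) fun d => ρ.finite _, ?_⟩
    rintro rfl
    obtain ⟨D, hD, hqI⟩ := ρ.init
    exact Option.some.inj (hE.symm.trans hD) ▸ hqI

theorem Run.Final.toAbsRun {τ : DataTree A} {ρ : M.Run τ} (hρ : ρ.Final) :
    ρ.toAbsRun.Accepting := by
  intro n hn S hS
  refine abstractOf_eq_zero fun D hD => hS ?_
  rw [← hD]
  exact fun q hq => hρ n hn q D hq

namespace AbsRun

variable {t : BTree A}

theorem exists_qeq (ρ : M.AbsRun t) : ∃ Qeq : Node → Set M.Q, M.qI ∈ Qeq [] ∧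
    ∀ n a, t.label n = some a →
      M.AbsTrans a (Qeq n) (ρ.v n) (ρ.v (n ++ [false])) (ρ.v (n ++ [true])) := by
  have h : ∀ n, ∃ Qeq : Set M.Q, ∀ a, t.label n = some a →
      M.AbsTrans a Qeq (ρ.v n) (ρ.v (n ++ [false])) (ρ.v (n ++ [true])) ∧
        (n = [] → M.qI ∈ Qeq) := by
    intro n
    cases hn : t.label n with
    | none => exact ⟨∅, by simp⟩
    | some a => simpa using ρ.step n a hn
  choose Qeq hQeq using h
  obtain ⟨a, ha⟩ := Option.isSome_iff_exists.1 t.root_nonleaf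
  exact ⟨Qeq, (hQeq [] a ha).2 rfl, fun n b hb => (hQeq n b hb).1⟩

theorem exists_concretization (ρ : M.AbsRun t) :
    ∃ (E : Node → ℕ) (G : Node → Set (M.Q × ℕ)), (∀ n, IsConcretization (G n) (ρ.v n)) ∧
      (M.qI, E []) ∈ G [] ∧
      (∀ n a, t.label n = some a → M.Trans a (E n) (G n) (G (n ++ [false])) (G (n ++ [true]))) ∧
      ∀ n d, t.label n = none → G (n ++ [d]) = ∅ := by
  have := M.fin
  obtain ⟨Qeq, hqI, hQeq⟩ := ρ.exists_qeq
  have hpos : 0 < ρ.v [] (Qeq []) := by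
    obtain ⟨a, ha⟩ := Option.isSome_iff_exists.1 t.root_nonleaf
    exact (hQeq [] a ha).1.resolve_right (Set.nonempty_of_mem hqI).ne_empty
  have hstep : ∀ (n : Node) (G : {G // IsConcretization G (ρ.v n)}),
      ∃ H : ∀ d, {H // IsConcretization H (ρ.v (n ++ [d]))}, ∃ E, IsPivot G.1 (Qeq n) E ∧
        (∀ a, t.label n = some a → M.Trans a E G.1 (H false).1 (H true).1) ∧
        ∀ d, t.label n = none → (H d).1 = ∅ := by
    rintro n ⟨G, hG⟩
    obtain ⟨E, hE⟩ := exists_isPivot hG.finite (Qeq n)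
    cases hn : t.label n with
    | none => exact ⟨fun d => ⟨∅, isConcretization_empty _⟩, E, hE, by simp, by simp⟩
    | some a =>
      obtain ⟨H, hH, htrans⟩ :=
        AbsTrans.exists_trans (w := fun d => ρ.v (n ++ [d])) (hQeq n a hn) hG hE
      exact ⟨fun d => ⟨H d, hH d⟩, E, hE, by simpa using htrans, by simp⟩
  obtain ⟨G, hroot, hG⟩ := exists_forall_step_append_singleton
    ⟨Qeq [] ×ˢ {0}, isConcretization_prod_singleton hpos 0⟩ _ hstep
  choose E hE htrans hempty using hG
  refine ⟨E, fun n => (G n).1, fun n => (G n).2, ?_, htrans, hempty⟩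
  have hbundle : Bundle (G []).1 (E []) = Qeq [] :=
    (hE []).bundle_eq (D := 0) (by rw [hroot, bundle_prod_singleton_self])
  exact hbundle.symm.subset hqI

theorem Accepting.exists_final {ρ : M.AbsRun t} (hρ : ρ.Accepting) :
    ∃ E, ∃ σ : M.Run (t.withData E), σ.Final := by
  obtain ⟨E, G, hG, hqI, htrans, hempty⟩ := ρ.exists_concretization
  refine ⟨E, ⟨G, fun n => (hG n).finite, ?support, ⟨E [], ?root, hqI⟩, ?step⟩, ?final⟩
  case support =>
    intro n hn
    rcases List.eq_nil_or_concat' n with rfl | ⟨m, d, rfl⟩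
    · exact absurd (Or.inl rfl) hn
    · exact hempty m d (Option.not_isSome_iff_eq_none.1 fun hm => hn (Or.inr ⟨m, d, rfl, hm⟩))
  case root =>
    obtain ⟨a, ha⟩ := Option.isSome_iff_exists.1 t.root_nonleaf
    simp [BTree.withData, ha]
  case step =>
    intro n a D (ha : t.label n = some a) hD
    obtain rfl : E n = D := by simpa [BTree.withData, ha] using hD
    exact htrans n a ha
  case final =>
    intro n hn q D hq
    by_contra hqF
    have hD : D ∈ activeData (G n) := ⟨q, hq⟩
    have hzero : ρ.v n (Bundle (G n) D) = 0 := hρ n hn _ fun h => hqF (h hq)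
    have hle := (hG n).abstractOf_le (Bundle (G n) D) hD
    exact (abstractOf_bundle_pos (hG n).finite hD).ne' (Nat.le_zero.1 (hzero ▸ hle))

end AbsRun

end ATRA

theorem absrun_iff_run_general {A : Type} (M : ATRA A) (t : BTree A) :
    (∃ ρ : M.AbsRun t, ρ.Accepting) ↔
      ∃ τ : DataTree A, τ.toTree = t ∧ ∃ ρ : M.Run τ, ρ.Final := by
  constructor
  · rintro ⟨ρ, hρ⟩
    obtain ⟨E, hE⟩ := hρ.exists_final
    exact ⟨t.withData E, rfl, hE⟩
  · rintro ⟨τ, rfl, ρ, hρ⟩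
    exact ⟨ρ.toAbsRun, hρ.toAbsRun⟩

/-- An ATRA₁ has an accepting abstract run on a finite tree `t`
iff it has a final run on some (finite) data tree `τ` with `tree(τ) = t`. -/
theorem absrun_iff_run {A : Type} [Fintype A] (M : ATRA A) (t : BTree A)
    (ht : t.Finite) :
    (∃ ρ : M.AbsRun t, ρ.Accepting) ↔
      (∃ τ : DataTree A, τ.Finite ∧ τ.toTree = t ∧ ∃ ρ : M.Run τ, ρ.Final) := by
  rw [absrun_iff_run_general]
  constructor
  · rintro ⟨τ, rfl, hτ⟩
    exact ⟨τ, ht, rfl, hτ⟩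
  · rintro ⟨τ, _, h, hτ⟩
    exact ⟨τ, h, hτ⟩
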